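/- Let m, k be positive integers with m ≥ 4 and m > k + 2. For z ∈ F_{2^k} define f^{(z)} : F_{2^m} × F_{2^m} → F_2 by f^{(z)}(x₁,x₂) = Tr_1^m(x₁ · x₂^{2^m − 2}) if Tr_1^k(z) = 0 and f^{(z)}(x₁,x₂) = Tr_1^m(x₂ · x₁^{2^m − 2}) if Tr_1^k(z) = 1, and define f : F_{2^m} × F_{2^m} × F_{2^k} × F_{2^k} → F_2 by f(x₁,x₂,y,z) = f^{(z)}(x₁,x₂) + Tr_1^k(yz). Then f is a bent function and every M-subspace of f has F_2-dimension strictly less than m + k. -/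

import Mathlib

/-- The second-order derivative `D_a D_b f (x) = f x + f (x+a) + f (x+b) + f (x+a+b)`. -/
def D2 {V : Type*} [AddCommGroup V] (f : V → ZMod 2) (a b x : V) : ZMod 2 :=
  f x + f (x + a) + f (x + b) + f (x + a + b)

/-- An `M`-subspace of `f` : a subspace on which all second-order derivatives of `f` vanish. -/
def IsMSubspace {V : Type*} [AddCommGroup V] [Module (ZMod 2) V] (f : V → ZMod 2)
    (U : Submodule (ZMod 2) V) : Prop :=
  ∀ a ∈ U, ∀ b ∈ U, ∀ x, D2 f a b x = 0

/-- A Boolean function on a finite `F₂`-vector space is bent if every nonzero derivative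
is balanced. -/
def IsBent {V : Type*} [AddCommGroup V] (f : V → ZMod 2) : Prop :=
  ∀ a : V, a ≠ 0 → ∀ c : ZMod 2,
    Nat.card {x : V // f (x + a) + f x = c} = Nat.card V / 2

/-- The absolute trace map of `F_{2^m}`. -/
noncomputable def Tr (m : ℕ) (x : GaloisField 2 m) : ZMod 2 :=
  Algebra.trace (ZMod 2) (GaloisField 2 m) x

theorem aux_z : ∀ u c : ZMod 2, ¬ u = c → u + 1 = c := by decide

theorem aux_card {V : Type*} [Finite V] (g : V → ZMod 2) (s : V → V)
    (hs : ∀ x, s (s x) = x) (hg : ∀ x, g (s x) = g x + 1) (c : ZMod 2) :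
    Nat.card {x : V // g x = c} = Nat.card V / 2 := by
  classical
  have e : {x : V // g x = c} ≃ {x : V // ¬ g x = c} :=
    { toFun := fun x => ⟨s x.1, by rw [hg, x.2]; simp⟩
      invFun := fun x => ⟨s x.1, by
        rw [hg]; exact aux_z _ _ x.2⟩
      left_inv := fun x => Subtype.ext (hs _)
      right_inv := fun x => Subtype.ext (hs _) }
  have h1 := Nat.card_congr (Equiv.sumCompl (fun x : V => g x = c))
  rw [Nat.card_sum, ← Nat.card_congr e] at h1
  omega

theorem aux_pow (m : ℕ) (hm : 4 ≤ m) (x : GaloisField 2 m) : x ^ (2 ^ m - 2) = x⁻¹ := by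
  have h16 : 2 ^ 4 ≤ 2 ^ m := Nat.pow_le_pow_right (by norm_num) hm
  by_cases hx : x = 0
  · subst hx; rw [zero_pow (by omega), inv_zero]
  · have := Fintype.ofFinite (GaloisField 2 m)
    have h := FiniteField.pow_card_sub_one_eq_one x hx
    rw [← Nat.card_eq_fintype_card, GaloisField.card 2 m (by omega)] at h
    apply eq_inv_of_mul_eq_one_left
    rw [← pow_succ, ← h]; congr 1; omega

theorem Tr_add (m : ℕ) (x y : GaloisField 2 m) : Tr m (x + y) = Tr m x + Tr m y := by
  simp [Tr]

theorem Tr_zero (m : ℕ) : Tr m 0 = 0 := by simp [Tr]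

theorem aux_nondeg (m : ℕ) (a : GaloisField 2 m) (ha : a ≠ 0) :
    ∃ t, Tr m (t * a) = 1 := by
  by_contra! h
  apply ha
  have h0 : ∀ t, Tr m (t * a) = 0 := fun t => by
    have := h t; revert this; generalize Tr m (t * a) = u; revert u; decide
  refine (traceForm_nondegenerate (ZMod 2) (GaloisField 2 m)).1 a fun t => ?_
  rw [Algebra.traceForm_apply, mul_comm]; exact h0 t

/-- translation invariance of MM bent function -/
theorem aux_bal (m : ℕ) (a1 a2 : GaloisField 2 m) (ha : ¬ (a1 = 0 ∧ a2 = 0)) :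
    ∃ s : GaloisField 2 m × GaloisField 2 m → GaloisField 2 m × GaloisField 2 m,
      (∀ p, s (s p) = p) ∧ ∀ p,
        Tr m (((s p).1 + a1) * ((s p).2 + a2)⁻¹) + Tr m ((s p).1 * (s p).2⁻¹)
        = Tr m ((p.1 + a1) * (p.2 + a2)⁻¹) + Tr m (p.1 * p.2⁻¹) + 1 := by
  have c2 : ∀ x : GaloisField 2 m, x + x = 0 := CharTwo.add_self_eq_zero
  by_cases h2 : a2 = 0
  · have h1 : a1 ≠ 0 := fun h => ha ⟨h, h2⟩
    subst h2
    obtain ⟨t, ht⟩ := aux_nondeg m a1 h1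
    refine ⟨fun p => (p.1, (p.2⁻¹ + t)⁻¹), fun p => ?_, fun p => ?_⟩
    · simp [add_assoc, c2]
    · simp only [add_zero, inv_inv]
      rw [← Tr_add, ← Tr_add, ← ht, ← Tr_add]
      congr 1
      linear_combination c2 (p.1 * t)
  · have : ∀ x : GaloisField 2 m, ∃ t, Tr m (t * ((x + a2)⁻¹ + x⁻¹)) = 1 := fun x => by
      apply aux_nondeg
      intro h
      rw [CharTwo.add_eq_zero, inv_inj] at h
      exact h2 (by simpa using h)
    choose t ht using this
    refine ⟨fun p => (p.1 + t p.2, p.2), fun p => ?_, fun p => ?_⟩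
    · simp [add_assoc, c2]
    · simp only
      rw [← Tr_add, ← Tr_add, ← ht p.2, ← Tr_add]
      congr 1
      ring

theorem aux_inv (m : ℕ) (hm : 4 ≤ m) (a b : GaloisField 2 m)
    (h : ∀ x : GaloisField 2 m, x⁻¹ + (x + a)⁻¹ + (x + b)⁻¹ + (x + a + b)⁻¹ = 0) :
    a = 0 ∨ b = 0 ∨ a = b := by
  classical
  have c2 : ∀ x : GaloisField 2 m, x + x = 0 := CharTwo.add_self_eq_zero
  have := Fintype.ofFinite (GaloisField 2 m)
  have hc : ∃ x, x ∉ ({0, a, b, a + b} : Finset (GaloisField 2 m)) := by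
    by_contra! hx
    have h1 := Finset.card_le_card (fun x _ => hx x : Finset.univ ⊆ _)
    have h2 : ({0, a, b, a + b} : Finset (GaloisField 2 m)).card ≤ 4 := Finset.card_le_four
    rw [Finset.card_univ, ← Nat.card_eq_fintype_card, GaloisField.card 2 m (by omega)] at h1
    have h16 : 2 ^ 4 ≤ 2 ^ m := Nat.pow_le_pow_right (by norm_num) hm
    omega
  obtain ⟨x, hx⟩ := hc
  simp only [Finset.mem_insert, Finset.mem_singleton, not_or] at hx
  obtain ⟨x0, xa, xb, xab⟩ := hx
  have ya : x + a ≠ 0 := by rwa [Ne, CharTwo.add_eq_zero]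
  have yb : x + b ≠ 0 := by rwa [Ne, CharTwo.add_eq_zero]
  have yab : x + a + b ≠ 0 := by rwa [Ne, add_assoc, CharTwo.add_eq_zero]
  have h := h x
  have two : (2 : GaloisField 2 m) = 0 := CharTwo.two_eq_zero
  have key : a * b * (a + b) = 0 := by
    field_simp at h
    have h4 : (4 : GaloisField 2 m) = 0 := by linear_combination 2 * two
    grind
  rcases mul_eq_zero.1 key with h | h
  · rcases mul_eq_zero.1 h with h | h <;> simp [h]
  · right; right; rwa [CharTwo.add_eq_zero] at h

theorem aux_D2 (m : ℕ) (hm : 4 ≤ m) (a1 a2 b1 b2 : GaloisField 2 m)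
    (h : ∀ x1 x2 : GaloisField 2 m, Tr m (x1 * x2⁻¹) + Tr m ((x1 + a1) * (x2 + a2)⁻¹)
      + Tr m ((x1 + b1) * (x2 + b2)⁻¹) + Tr m ((x1 + a1 + b1) * (x2 + a2 + b2)⁻¹) = 0) :
    a2 = 0 ∨ b2 = 0 ∨ a2 = b2 := by
  apply aux_inv m hm
  intro x
  by_contra hne
  obtain ⟨t, ht⟩ := aux_nondeg m _ hne
  have h1 := h t x
  have h0 := h 0 x
  simp only [← Tr_add] at h1 h0
  have : Tr m (t * (x⁻¹ + (x + a2)⁻¹ + (x + b2)⁻¹ + (x + a2 + b2)⁻¹)) = 0 := by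
    have h2 := congrArg₂ (· + ·) h1 h0
    simp only [← Tr_add, add_zero] at h2
    rw [← h2]
    congr 1
    have two : (2 : GaloisField 2 m) = 0 := CharTwo.two_eq_zero
    linear_combination (-a1 * (x + a2)⁻¹ - b1 * (x + b2)⁻¹ - (a1 + b1) * (x + a2 + b2)⁻¹) * two
  rw [ht] at this
  exact one_ne_zero this

theorem aux_rank {V W : Type*} [AddCommGroup V] [Module (ZMod 2) V] [AddCommGroup W]
    [Module (ZMod 2) W] [Finite V] (S : Submodule (ZMod 2) V) (φ : V →ₗ[ZMod 2] W) :
    Module.finrank (ZMod 2) S = Module.finrank (ZMod 2) (S.map φ)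
      + Module.finrank (ZMod 2) (S ⊓ LinearMap.ker φ : Submodule (ZMod 2) V) := by
  have h := LinearMap.finrank_range_add_finrank_ker (φ.domRestrict S)
  rw [LinearMap.range_domRestrict] at h
  rw [← h, LinearMap.ker_domRestrict]
  congr 1
  rw [← Submodule.map_comap_subtype]
  exact (LinearEquiv.finrank_eq (Submodule.equivMapOfInjective _ S.injective_subtype _))

theorem aux_one {W : Type*} [AddCommGroup W] [Module (ZMod 2) W] [Finite W]
    (S : Submodule (ZMod 2) W) (h : ∀ a ∈ S, ∀ b ∈ S, a = 0 ∨ b = 0 ∨ a = b) :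
    Module.finrank (ZMod 2) S ≤ 1 := by
  by_cases hS : ∃ v ∈ S, v ≠ 0
  · obtain ⟨v, hv, hv0⟩ := hS
    refine finrank_le_one (⟨v, hv⟩ : S) fun w => ?_
    rcases h v hv w.1 w.2 with h | h | h
    · exact absurd h hv0
    · exact ⟨0, by ext; simp [h]⟩
    · exact ⟨1, by ext; simp [h]⟩
  · push Not at hS
    have : S = ⊥ := by rw [Submodule.eq_bot_iff]; exact hS
    subst this; simp

/-- Corollary 3.9: the generalized Maiorana–McFarland function built from the two
Maiorana–McFarland functions `Tr(x₁ x₂^{2^m-2})` and `Tr(x₂ x₁^{2^m-2})` is a bent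
function with no `M`-subspace of dimension `m + k`, hence lies outside the completed
Maiorana–McFarland class. -/
theorem GMM_inversion_bent_outside_MM
    (m k : ℕ) (hk : 0 < k) (hm : 4 ≤ m) (hmk : m > k + 2)
    (f : GaloisField 2 m × GaloisField 2 m × GaloisField 2 k × GaloisField 2 k → ZMod 2)
    (hf : ∀ (x₁ x₂ : GaloisField 2 m) (y z : GaloisField 2 k),
      f (x₁, x₂, y, z) =
        (if Tr k z = 0 then Tr m (x₁ * x₂ ^ (2 ^ m - 2)) else Tr m (x₂ * x₁ ^ (2 ^ m - 2)))
          + Tr k (y * z)) :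
    IsBent f ∧
    ∀ U : Submodule (ZMod 2)
        (GaloisField 2 m × GaloisField 2 m × GaloisField 2 k × GaloisField 2 k),
      IsMSubspace f U → Module.finrank (ZMod 2) U < m + k := by
  have hV : Finite (GaloisField 2 m × GaloisField 2 m × GaloisField 2 k × GaloisField 2 k) :=
    inferInstance
  simp only [aux_pow m hm] at hf
  have z2 : ∀ u : ZMod 2, u + u = 0 := by decide
  constructor
  · rintro ⟨a1, a2, b, c⟩ ha d
    by_cases hc : c = 0
    · subst hc
      by_cases hx : a1 = 0 ∧ a2 = 0
      · obtain ⟨rfl, rfl⟩ := hx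
        have hb : b ≠ 0 := by rintro rfl; exact ha rfl
        obtain ⟨t, ht⟩ := aux_nondeg k b hb
        have key : ∀ x1 x2 y z, f ((x1, x2, y, z) + (0, 0, b, 0)) + f (x1, x2, y, z)
            = Tr k (z * b) := by
          intro x1 x2 y z
          simp only [Prod.mk_add_mk, add_zero, hf, add_mul, Tr_add]
          rw [mul_comm b z]
          generalize (if Tr k z = 0 then Tr m (x1 * x2⁻¹) else Tr m (x2 * x1⁻¹)) = u
          linear_combination z2 u + z2 (Tr k (y * z))
        refine aux_card _ (fun p => (p.1, p.2.1, p.2.2.1, p.2.2.2 + t)) ?_ ?_ d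
        · rintro ⟨x1, x2, y, z⟩; simp [add_assoc, CharTwo.add_self_eq_zero]
        · rintro ⟨x1, x2, y, z⟩
          rw [key, key, add_mul, Tr_add, ht]
      · obtain ⟨s, hs, hs'⟩ := aux_bal m a1 a2 hx
        obtain ⟨r, hr, hr'⟩ := aux_bal m a2 a1 (fun h => hx ⟨h.2, h.1⟩)
        refine aux_card _ (fun p => if Tr k p.2.2.2 = 0 then
            ((s (p.1, p.2.1)).1, (s (p.1, p.2.1)).2, p.2.2)
          else ((r (p.2.1, p.1)).2, (r (p.2.1, p.1)).1, p.2.2)) ?_ ?_ d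
        · rintro ⟨x1, x2, y, z⟩
          by_cases hz : Tr k z = 0 <;> simp [hz, hs, hr]
        · rintro ⟨x1, x2, y, z⟩
          by_cases hz : Tr k z = 0
          · have := hs' (x1, x2)
            simp only [Prod.mk_add_mk, add_zero, hf, hz, if_true] at this ⊢
            linear_combination this
          · have := hr' (x2, x1)
            simp only [Prod.mk_add_mk, add_zero, hf, hz, if_false] at this ⊢
            linear_combination this
    · obtain ⟨t, ht⟩ := aux_nondeg k c hc
      refine aux_card _ (fun p => (p.1, p.2.1, p.2.2.1 + t, p.2.2.2)) ?_ ?_ d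
      · rintro ⟨x1, x2, y, z⟩; simp [add_assoc, CharTwo.add_self_eq_zero]
      · rintro ⟨x1, x2, y, z⟩
        simp only [Prod.mk_add_mk, hf, add_mul, mul_add, Tr_add, ht]
        linear_combination z2 (Tr k (t * z))
  · intro U hU
    have hfk : Module.finrank (ZMod 2) (GaloisField 2 k) = k := GaloisField.finrank 2 (by omega)
    let F := GaloisField 2 m
    let K := GaloisField 2 k
    let p1 : F × F × K × K →ₗ[ZMod 2] F := LinearMap.fst _ _ _
    let p2 : F × F × K × K →ₗ[ZMod 2] F := LinearMap.fst _ _ _ ∘ₗ LinearMap.snd _ _ _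
    let p3 : F × F × K × K →ₗ[ZMod 2] K :=
      LinearMap.fst _ _ _ ∘ₗ LinearMap.snd _ _ _ ∘ₗ LinearMap.snd _ _ _
    let p4 : F × F × K × K →ₗ[ZMod 2] K :=
      LinearMap.snd _ _ _ ∘ₗ LinearMap.snd _ _ _ ∘ₗ LinearMap.snd _ _ _
    have r4 := aux_rank U p4
    have r1 := aux_rank (U ⊓ LinearMap.ker p4) p1
    have r2 := aux_rank (U ⊓ LinearMap.ker p4 ⊓ LinearMap.ker p1) p2
    have r3 := aux_rank (U ⊓ LinearMap.ker p4 ⊓ LinearMap.ker p1 ⊓ LinearMap.ker p2) p3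
    have r0 : U ⊓ LinearMap.ker p4 ⊓ LinearMap.ker p1 ⊓ LinearMap.ker p2 ⊓ LinearMap.ker p3
        = ⊥ := by
      rw [Submodule.eq_bot_iff]
      rintro ⟨x1, x2, y, z⟩ ⟨⟨⟨⟨_, h4⟩, h1⟩, h2⟩, h3⟩
      have h1 : x1 = 0 := h1
      have h2 : x2 = 0 := h2
      have h3 : y = 0 := h3
      have h4 : z = 0 := h4
      subst h1 h2 h3 h4; rfl
    rw [r0, finrank_bot] at r3
    have l4 := Submodule.finrank_le (U.map p4)
    have l3 := Submodule.finrank_le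
      ((U ⊓ LinearMap.ker p4 ⊓ LinearMap.ker p1 ⊓ LinearMap.ker p2).map p3)
    have hfk' : Module.finrank (ZMod 2) K = k := hfk
    obtain ⟨w, hw⟩ := aux_nondeg k (1 : GaloisField 2 k) one_ne_zero
    rw [mul_one] at hw
    have main : ∀ a ∈ U ⊓ LinearMap.ker p4, ∀ b ∈ U ⊓ LinearMap.ker p4,
        (a.1 = 0 ∨ b.1 = 0 ∨ a.1 = b.1) ∧ (a.2.1 = 0 ∨ b.2.1 = 0 ∨ a.2.1 = b.2.1) := by
      rintro ⟨a1, a2, a3, a4⟩ ⟨haU, ha4⟩ ⟨b1, b2, b3, b4⟩ ⟨hbU, hb4⟩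
      have ha4 : a4 = 0 := ha4
      have hb4 : b4 = 0 := hb4
      subst ha4 hb4
      have h := hU _ haU _ hbU
      constructor
      · refine aux_D2 m hm a2 a1 b2 b1 fun x1 x2 => ?_
        have := h (x2, x1, 0, w)
        simp only [D2, Prod.mk_add_mk, add_zero, hf, hw, one_ne_zero, if_false, add_mul, zero_mul,
          zero_add, Tr_add, Tr_zero] at this
        simp only [add_mul, Tr_add]
        linear_combination this - z2 (Tr k (a3 * w)) - z2 (Tr k (b3 * w))
      · refine aux_D2 m hm a1 a2 b1 b2 fun x1 x2 => ?_
        have := h (x1, x2, 0, 0)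
        simp only [D2, Prod.mk_add_mk, add_zero, hf, if_true, mul_zero, Tr_zero] at this
        exact this
    have l1 : Module.finrank (ZMod 2) ((U ⊓ LinearMap.ker p4).map p1) ≤ 1 := by
      apply aux_one
      rintro _ ⟨a, ha, rfl⟩ _ ⟨b, hb, rfl⟩
      exact (main a ha b hb).1
    have l2 : Module.finrank (ZMod 2)
        ((U ⊓ LinearMap.ker p4 ⊓ LinearMap.ker p1).map p2) ≤ 1 := by
      apply aux_one
      rintro _ ⟨a, ha, rfl⟩ _ ⟨b, hb, rfl⟩
      exact (main a ha.1 b hb.1).2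
    omega
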